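/- arXiv:2302.14086 — 3 statements merged into one kernel-verified Lean document; each statement's English description precedes it below -/
import Mathlib

section
/- Assume that M and the quotient M/Σ_I for every subset I ⊆ {1,…,n} are projective R-modules, and that the collection M_1,…,M_n is distributive. Then for every I ⊆ {1,…,n}: (i) the R-linear map (M/Σ_I)^* → M^* dual to the canonical projection M → M/Σ_I is injective with image ⋂_{i∈I} M_i^∨, so (M/Σ_I)^* ≅ ⋂_{i∈I} M_i^∨; and (ii) the restriction map M^* → (Π_I)^* is surjective with kernel ∑_{i∈I} M_i^∨, so it induces an isomorphism M^*/∑_{i∈I} M_i^∨ ≅ (Π_I)^*. -/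
/-!
STATEMENT 1: if `M` and all quotients `M/Σ_I` are projective and the collection
`M_1, …, M_n` is distributive, then for every `I ⊆ {1,…,n}` the map dual to the projection
`M → M/Σ_I` is injective with image `⋂_{i∈I} M_i^∨` (so `(M/Σ_I)^* ≅ ⋂_{i∈I} M_i^∨`),
and the restriction map `M^* → (Π_I)^*` is surjective with kernel `∑_{i∈I} M_i^∨`
(so it induces an isomorphism `M^*/∑_{i∈I} M_i^∨ ≅ (Π_I)^*`).
-/

variable {R M : Type*} [CommRing R] [AddCommGroup M] [Module R M]

/-- `Σ_I = ∑_{i ∈ I} M_i` (with `Σ_∅ = 0`). -/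
abbrev sigmaSub {n : ℕ} (Mf : Fin n → Submodule R M) (I : Finset (Fin n)) : Submodule R M :=
  I.sup Mf

/-- `Π_I = ⋂_{i ∈ I} M_i` (with `Π_∅ = M`). -/
abbrev piSub {n : ℕ} (Mf : Fin n → Submodule R M) (I : Finset (Fin n)) : Submodule R M :=
  I.inf Mf

/-- The collection `M_1, …, M_n` is distributive if the sublattice of the lattice of
`R`-submodules of `M` generated by `{M_1, …, M_n}` under `+` (= `⊔`) and `∩` (= `⊓`)
is a distributive lattice. -/
def IsDistributiveFamily {n : ℕ} (Mf : Fin n → Submodule R M) : Prop :=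
  ∀ a ∈ latticeClosure (Set.range Mf), ∀ b ∈ latticeClosure (Set.range Mf),
    ∀ c ∈ latticeClosure (Set.range Mf), a ⊓ (b ⊔ c) = (a ⊓ b) ⊔ (a ⊓ c)

/-- If `M/(A + B)` is projective, then the canonical injection `M/(A ∩ B) → M/A × M/B` has a
retraction. -/
theorem exists_retraction_mkQ_inf (A B : Submodule R M) [Module.Projective R (M ⧸ (A ⊔ B))] :
    ∃ r : ((M ⧸ A) × (M ⧸ B)) →ₗ[R] M ⧸ (A ⊓ B),
      r ∘ₗ (Submodule.factor (inf_le_left : A ⊓ B ≤ A)).prod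
        (Submodule.factor (inf_le_right : A ⊓ B ≤ B)) = LinearMap.id := by
  set f := (Submodule.factor (inf_le_left : A ⊓ B ≤ A)).prod
    (Submodule.factor (inf_le_right : A ⊓ B ≤ B)) with hf
  let g : ((M ⧸ A) × (M ⧸ B)) →ₗ[R] M ⧸ (A ⊔ B) :=
    (Submodule.factor (le_sup_left : A ≤ A ⊔ B)).coprod
      (-Submodule.factor (le_sup_right : B ≤ A ⊔ B))
  have f_injective : Function.Injective f := by
    rw [injective_iff_map_eq_zero]
    intro x hx
    obtain ⟨x, rfl⟩ := Submodule.mkQ_surjective _ x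
    simpa [hf, Submodule.Quotient.mk_eq_zero] using hx
  have g_surjective : Function.Surjective g := by
    intro x
    obtain ⟨x, rfl⟩ := Submodule.mkQ_surjective _ x
    exact ⟨(A.mkQ x, 0), by simp [g]⟩
  have fg_exact : Function.Exact f g := by
    rintro ⟨x, y⟩
    obtain ⟨x, rfl⟩ := Submodule.mkQ_surjective _ x
    obtain ⟨y, rfl⟩ := Submodule.mkQ_surjective _ y
    constructor
    · intro h
      have hxy : x - y ∈ A ⊔ B := by
        rw [← Submodule.Quotient.mk_eq_zero, Submodule.Quotient.mk_sub]
        simpa [g, sub_eq_add_neg] using h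
      obtain ⟨a, ha, b, hb, hab⟩ := Submodule.mem_sup.1 hxy
      refine ⟨(A ⊓ B).mkQ (x - a), Prod.ext ?_ ?_⟩
      · simpa [hf] using (Submodule.Quotient.mk_eq_zero A).2 ha
      · have : x - a = y + b := by rw [sub_eq_iff_eq_add, add_assoc, add_comm b, hab]; abel
        rw [this]
        simpa [hf] using (Submodule.Quotient.mk_eq_zero B).2 hb
    · rintro ⟨z, hz⟩
      obtain ⟨z, rfl⟩ := Submodule.mkQ_surjective _ z
      rw [← hz]
      simp [hf, g]
  exact ((fg_exact.split_tfae f_injective g_surjective).out 0 1).1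
    (Module.projective_lifting_property g LinearMap.id g_surjective)

theorem projective_quotient_inf (A B : Submodule R M) [Module.Projective R (M ⧸ A)]
    [Module.Projective R (M ⧸ B)] [Module.Projective R (M ⧸ (A ⊔ B))] :
    Module.Projective R (M ⧸ (A ⊓ B)) := by
  obtain ⟨r, hr⟩ := exists_retraction_mkQ_inf A B
  exact Module.Projective.of_split _ r hr

theorem dualAnnihilator_inf_eq_of_projective (A B : Submodule R M)
    [Module.Projective R (M ⧸ (A ⊔ B))] :
    (A ⊓ B).dualAnnihilator = A.dualAnnihilator ⊔ B.dualAnnihilator := by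
  refine le_antisymm (fun φ hφ => ?_) (Submodule.sup_dualAnnihilator_le_inf A B)
  obtain ⟨r, hr⟩ := exists_retraction_mkQ_inf A B
  rw [← Submodule.range_dualMap_mkQ_eq] at hφ
  obtain ⟨ψ, rfl⟩ := hφ
  refine Submodule.mem_sup.2 ⟨ψ ∘ₗ r ∘ₗ LinearMap.inl R _ _ ∘ₗ A.mkQ, ?_,
    ψ ∘ₗ r ∘ₗ LinearMap.inr R _ _ ∘ₗ B.mkQ, ?_, ?_⟩
  · rw [← Submodule.range_dualMap_mkQ_eq]
    exact ⟨ψ ∘ₗ r ∘ₗ LinearMap.inl R _ _, rfl⟩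
  · rw [← Submodule.range_dualMap_mkQ_eq]
    exact ⟨ψ ∘ₗ r ∘ₗ LinearMap.inr R _ _, rfl⟩
  · ext x
    have hx : r (A.mkQ x, B.mkQ x) = (A ⊓ B).mkQ x :=
      LinearMap.congr_fun hr ((A ⊓ B).mkQ x)
    simp only [LinearMap.add_apply, LinearMap.comp_apply, LinearMap.inl_apply,
      LinearMap.inr_apply, LinearMap.dualMap_apply, ← map_add, Prod.mk_add_mk, add_zero,
      zero_add, hx]

theorem dualMap_subtype_surjective_of_projective (N : Submodule R M)
    [Module.Projective R (M ⧸ N)] : Function.Surjective N.subtype.dualMap := by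
  obtain ⟨p, hp⟩ : ∃ p, p ∘ₗ N.subtype = LinearMap.id :=
    (((LinearMap.exact_subtype_mkQ N).split_tfae N.injective_subtype
      N.mkQ_surjective).out 0 1).1
      (Module.projective_lifting_property N.mkQ LinearMap.id N.mkQ_surjective)
  exact fun φ => ⟨φ ∘ₗ p, by rw [LinearMap.dualMap_apply', LinearMap.comp_assoc, hp]; rfl⟩

theorem sigmaSub_insert {n : ℕ} (Mf : Fin n → Submodule R M) (j : Fin n)
    (I : Finset (Fin n)) : sigmaSub Mf (insert j I) = Mf j ⊔ sigmaSub Mf I :=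
  Finset.sup_insert

theorem piSub_insert {n : ℕ} (Mf : Fin n → Submodule R M) (j : Fin n)
    (I : Finset (Fin n)) : piSub Mf (insert j I) = Mf j ⊓ piSub Mf I :=
  Finset.inf_insert

namespace IsDistributiveFamily

variable {n : ℕ} {Mf : Fin n → Submodule R M}

theorem sup_inf_right (hdist : IsDistributiveFamily Mf) {a b c : Submodule R M}
    (ha : a ∈ latticeClosure (Set.range Mf)) (hb : b ∈ latticeClosure (Set.range Mf))
    (hc : c ∈ latticeClosure (Set.range Mf)) : (a ⊓ b) ⊔ c = (a ⊔ c) ⊓ (b ⊔ c) := by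
  rw [hdist _ (isSublattice_latticeClosure.supClosed ha hc) b hb c hc,
    inf_eq_right.2 (le_sup_right : c ≤ a ⊔ c), inf_comm (a ⊔ c) b, hdist b hb a ha c hc,
    sup_assoc, sup_eq_right.2 (inf_le_right : b ⊓ c ≤ c), inf_comm]

theorem piSub_insert_sup_sigmaSub (hdist : IsDistributiveFamily Mf) (j : Fin n)
    (I J : Finset (Fin n)) :
    piSub Mf (insert j I) ⊔ sigmaSub Mf J =
      sigmaSub Mf (insert j J) ⊓ (piSub Mf I ⊔ sigmaSub Mf J) := by
  have hmem (i : Fin n) : Mf i ∈ latticeClosure (Set.range Mf) :=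
    subset_latticeClosure ⟨i, rfl⟩
  rw [piSub_insert, sigmaSub_insert]
  rcases I.eq_empty_or_nonempty with rfl | hI
  · simp
  rcases J.eq_empty_or_nonempty with rfl | hJ
  · simp
  refine hdist.sup_inf_right (hmem j) ?_ ?_
  · rw [piSub, ← Finset.inf'_eq_inf hI]
    exact isSublattice_latticeClosure.infClosed.finsetInf'_mem hI fun i _ => hmem i
  · rw [sigmaSub, ← Finset.sup'_eq_sup hJ]
    exact isSublattice_latticeClosure.supClosed.finsetSup'_mem hJ fun i _ => hmem i

theorem projective_quotient_piSub_sup_sigmaSub (hdist : IsDistributiveFamily Mf)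
    (hQ : ∀ I : Finset (Fin n), Module.Projective R (M ⧸ sigmaSub Mf I))
    (I J : Finset (Fin n)) : Module.Projective R (M ⧸ (piSub Mf I ⊔ sigmaSub Mf J)) := by
  induction I using Finset.induction_on generalizing J with
  | empty =>
    have : Subsingleton (M ⧸ (piSub Mf ∅ ⊔ sigmaSub Mf J)) :=
      Submodule.Quotient.subsingleton_iff.2 (by simp)
    infer_instance
  | insert j I _ ih =>
    have hsup : sigmaSub Mf (insert j J) ⊔ (piSub Mf I ⊔ sigmaSub Mf J) =
        piSub Mf I ⊔ sigmaSub Mf (insert j J) := by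
      rw [sigmaSub_insert, sup_left_comm,
        sup_eq_left.2 (le_sup_right : sigmaSub Mf J ≤ Mf j ⊔ sigmaSub Mf J)]
    have := hQ (insert j J)
    have := ih J
    have : Module.Projective R
        (M ⧸ (sigmaSub Mf (insert j J) ⊔ (piSub Mf I ⊔ sigmaSub Mf J))) := by
      rw [hsup]
      exact ih (insert j J)
    rw [hdist.piSub_insert_sup_sigmaSub]
    exact projective_quotient_inf _ _

theorem dualAnnihilator_piSub (hdist : IsDistributiveFamily Mf)
    (hQ : ∀ I : Finset (Fin n), Module.Projective R (M ⧸ sigmaSub Mf I))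
    (I : Finset (Fin n)) :
    (piSub Mf I).dualAnnihilator = I.sup fun i => (Mf i).dualAnnihilator := by
  induction I using Finset.induction_on with
  | empty => simp
  | insert j I _ ih =>
    have : Module.Projective R (M ⧸ (Mf j ⊔ piSub Mf I)) := by
      have := hdist.projective_quotient_piSub_sup_sigmaSub hQ I {j}
      rwa [sigmaSub, Finset.sup_singleton, sup_comm] at this
    rw [piSub_insert, Finset.sup_insert, dualAnnihilator_inf_eq_of_projective, ih]

end IsDistributiveFamily

theorem dualAnnihilator_sigmaSub {n : ℕ} (Mf : Fin n → Submodule R M) (I : Finset (Fin n)) :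
    (sigmaSub Mf I).dualAnnihilator = I.inf fun i => (Mf i).dualAnnihilator := by
  induction I using Finset.induction_on with
  | empty => simp
  | insert j I _ ih =>
    rw [sigmaSub_insert, Finset.inf_insert, Submodule.dualAnnihilator_sup_eq, ih]

theorem statement1 {n : ℕ} (hn : 1 ≤ n) (Mf : Fin n → Submodule R M)
    (hM : Module.Projective R M)
    (hQ : ∀ I : Finset (Fin n), Module.Projective R (M ⧸ sigmaSub Mf I))
    (hdist : IsDistributiveFamily Mf) :
    ∀ I : Finset (Fin n),
      -- (i) the dual of the projection `M → M/Σ_I` is injective with image `⋂_{i∈I} M_i^∨`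
      (Function.Injective ((sigmaSub Mf I).mkQ.dualMap) ∧
        LinearMap.range ((sigmaSub Mf I).mkQ.dualMap) =
          I.inf fun i => (Mf i).dualAnnihilator) ∧
      Nonempty (Module.Dual R (M ⧸ sigmaSub Mf I) ≃ₗ[R]
        ↥(I.inf fun i => (Mf i).dualAnnihilator)) ∧
      -- (ii) the restriction map `M^* → (Π_I)^*` is surjective with kernel `∑_{i∈I} M_i^∨`
      (Function.Surjective ((piSub Mf I).subtype.dualMap) ∧
        LinearMap.ker ((piSub Mf I).subtype.dualMap) =
          I.sup fun i => (Mf i).dualAnnihilator) ∧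
      Nonempty ((Module.Dual R M ⧸ (I.sup fun i => (Mf i).dualAnnihilator)) ≃ₗ[R]
        Module.Dual R ↥(piSub Mf I)) := by
  intro I
  have injective : Function.Injective (sigmaSub Mf I).mkQ.dualMap :=
    LinearMap.dualMap_injective_of_surjective (Submodule.mkQ_surjective _)
  have range_eq : LinearMap.range (sigmaSub Mf I).mkQ.dualMap =
      I.inf fun i => (Mf i).dualAnnihilator := by
    rw [Submodule.range_dualMap_mkQ_eq, dualAnnihilator_sigmaSub]
  have : Module.Projective R (M ⧸ piSub Mf I) := by
    have := hdist.projective_quotient_piSub_sup_sigmaSub hQ I ∅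
    rwa [sigmaSub, Finset.sup_empty, sup_bot_eq] at this
  have surjective := dualMap_subtype_surjective_of_projective (piSub Mf I)
  have ker_eq : LinearMap.ker (piSub Mf I).subtype.dualMap =
      I.sup fun i => (Mf i).dualAnnihilator := by
    rw [LinearMap.ker_dualMap_eq_dualAnnihilator_range, Submodule.range_subtype,
      hdist.dualAnnihilator_piSub hQ]
  exact ⟨⟨injective, range_eq⟩,
    ⟨(LinearEquiv.ofInjective _ injective).trans (LinearEquiv.ofEq _ _ range_eq)⟩,
    ⟨surjective, ker_eq⟩,
    ⟨(Submodule.quotEquivOfEq _ _ ker_eq.symm).trans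
      (LinearMap.quotKerEquivOfSurjective _ surjective)⟩⟩
end

section
/- Assume that M is a flat R-module, that M/Σ_I is a flat R-module for every subset I ⊆ {1,…,n}, and that the collection M_1,…,M_n is distributive. Then for every subset I ⊆ {1,…,n} the R-module L^I := Π_{{1,…,n}∖I} / (Π_{{1,…,n}∖I} ∩ Σ_I) is flat. -/
/-!
STATEMENT 3: if `M` and all quotients `M/Σ_I` are flat `R`-modules and the collection
`M_1, …, M_n` is distributive, then for every `I ⊆ {1,…,n}` the `R`-module
`L^I = Π_{{1,…,n}∖I} / (Π_{{1,…,n}∖I} ∩ Σ_I)` is flat.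
-/

variable {R M : Type*} [CommRing R] [AddCommGroup M] [Module R M]

/-- `L^I = Π_{{1,…,n}∖I} / (Π_{{1,…,n}∖I} ∩ Σ_I)`. -/
abbrev subquotL {n : ℕ} (Mf : Fin n → Submodule R M) (I : Finset (Fin n)) : Type _ :=
  ↥(piSub Mf Iᶜ) ⧸ Submodule.comap (piSub Mf Iᶜ).subtype (sigmaSub Mf I)

theorem Module.Flat.of_exact {A B C : Type*} [AddCommGroup A] [Module R A]
    [AddCommGroup B] [Module R B] [AddCommGroup C] [Module R C] [Module.Flat R B]
    [Module.Flat R C] (f : A →ₗ[R] B) (g : B →ₗ[R] C) (hf : Function.Injective f)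
    (hfg : Function.Exact f g) (hg : Function.Surjective g) : Module.Flat R A := by
  rw [Module.Flat.iff_rTensor_injective']
  intro I
  have hI : Function.Injective (f.lTensor I) :=
    LinearMap.lTensor_injective_of_exact_of_flat g hg f hf hfg I
  have hB := Module.Flat.rTensor_preserves_injective_linearMap (M := B) I.subtype
    I.injective_subtype
  have hcomp : f.lTensor R ∘ₗ I.subtype.rTensor A = I.subtype.rTensor B ∘ₗ f.lTensor I := by
    rw [LinearMap.lTensor_comp_rTensor, LinearMap.rTensor_comp_lTensor]
  refine Function.Injective.of_comp (f := f.lTensor R) ?_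
  rw [← LinearMap.coe_comp, hcomp, LinearMap.coe_comp]
  exact hB.comp hI

theorem Module.Flat.prod {A B : Type*} [AddCommGroup A] [Module R A] [AddCommGroup B]
    [Module R B] [Module.Flat R A] [Module.Flat R B] : Module.Flat R (A × B) := by
  rw [Module.Flat.iff_rTensor_injective']
  intro I
  have hA := Module.Flat.rTensor_preserves_injective_linearMap (M := A) I.subtype
    I.injective_subtype
  have hB := Module.Flat.rTensor_preserves_injective_linearMap (M := B) I.subtype
    I.injective_subtype
  have hcomp : (TensorProduct.prodRight R R R A B).toLinearMap ∘ₗ I.subtype.rTensor (A × B) =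
      (I.subtype.rTensor A).prodMap (I.subtype.rTensor B) ∘ₗ
        (TensorProduct.prodRight R R I A B).toLinearMap :=
    TensorProduct.ext' fun x y ↦ by simp
  refine Function.Injective.of_comp (f := (TensorProduct.prodRight R R R A B).toLinearMap) ?_
  rw [← LinearMap.coe_comp, hcomp, LinearMap.coe_comp, LinearMap.coe_prodMap]
  exact (hA.prodMap hB).comp (LinearEquiv.injective _)

/-- The Mayer–Vietoris sequence `0 → M/(A ∩ B) → M/A × M/B → M/(A + B) → 0` gives flatness of
`M/(A ∩ B)`. -/
theorem Module.Flat.quotient_inf (A B : Submodule R M) [Module.Flat R (M ⧸ A)]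
    [Module.Flat R (M ⧸ B)] [Module.Flat R (M ⧸ (A ⊔ B))] : Module.Flat R (M ⧸ (A ⊓ B)) := by
  have := Module.Flat.prod (R := R) (A := M ⧸ A) (B := M ⧸ B)
  refine Module.Flat.of_exact
    ((Submodule.factor (inf_le_left : A ⊓ B ≤ A)).prod (Submodule.factor inf_le_right))
    ((Submodule.factor (le_sup_left : A ≤ A ⊔ B)).coprod (-Submodule.factor le_sup_right))
    ?_ ?_ ?_
  · rw [injective_iff_map_eq_zero]
    intro x
    obtain ⟨x, rfl⟩ := Submodule.Quotient.mk_surjective _ x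
    simp [Submodule.factor]
  · rintro ⟨x, y⟩
    obtain ⟨x, rfl⟩ := Submodule.Quotient.mk_surjective _ x
    obtain ⟨y, rfl⟩ := Submodule.Quotient.mk_surjective _ y
    constructor
    · intro h
      have hxy : x - y ∈ A ⊔ B := by
        rw [← Submodule.Quotient.mk_eq_zero, Submodule.Quotient.mk_sub]
        simpa [Submodule.factor, sub_eq_add_neg] using h
      obtain ⟨a, ha, b, hb, hab⟩ := Submodule.mem_sup.1 hxy
      refine ⟨Submodule.Quotient.mk (x - a), Prod.ext ?_ ?_⟩
      · exact (Submodule.Quotient.eq _).2 (by simpa using ha)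
      · refine (Submodule.Quotient.eq _).2 ?_
        rw [LinearMap.id_apply, sub_right_comm, ← hab, add_sub_cancel_left]
        exact hb
    · rintro ⟨z, hz⟩
      obtain ⟨z, rfl⟩ := Submodule.Quotient.mk_surjective _ z
      rw [← hz]
      simp [Submodule.factor]
  · intro x
    obtain ⟨x, rfl⟩ := Submodule.Quotient.mk_surjective _ x
    exact ⟨(Submodule.Quotient.mk x, 0), by simp [Submodule.factor]⟩

theorem IsDistributiveFamily.inf_sup_eq {n : ℕ} {Mf : Fin n → Submodule R M}
    (h : IsDistributiveFamily Mf) (I J : Finset (Fin n)) (j : Fin n) :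
    (Mf j ⊓ piSub Mf J) ⊔ sigmaSub Mf I =
      (piSub Mf J ⊔ sigmaSub Mf I) ⊓ (Mf j ⊔ sigmaSub Mf I) := by
  have hmem (i : Fin n) : Mf i ∈ latticeClosure (Set.range Mf) :=
    subset_latticeClosure ⟨i, rfl⟩
  have key : Mf j ⊓ (piSub Mf J ⊔ sigmaSub Mf I) =
      (Mf j ⊓ piSub Mf J) ⊔ (Mf j ⊓ sigmaSub Mf I) := by
    rcases J.eq_empty_or_nonempty with rfl | hJ
    · simp
    rcases I.eq_empty_or_nonempty with rfl | hI
    · simp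
    exact h _ (hmem j)
      _ (isSublattice_latticeClosure.infClosed.finsetInf_mem hJ fun i _ ↦ hmem i)
      _ (isSublattice_latticeClosure.supClosed.finsetSup_mem hI fun i _ ↦ hmem i)
  rw [← inf_sup_assoc_of_le (Mf j)
      (le_sup_right : sigmaSub Mf I ≤ piSub Mf J ⊔ sigmaSub Mf I),
    inf_comm _ (Mf j), key, sup_assoc, sup_eq_right.2 (inf_le_right : Mf j ⊓ sigmaSub Mf I ≤ _)]

theorem flat_quotient_piSub_sup_sigmaSub {n : ℕ} {Mf : Fin n → Submodule R M}
    (hQ : ∀ I : Finset (Fin n), Module.Flat R (M ⧸ sigmaSub Mf I))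
    (hdist : IsDistributiveFamily Mf) (I J : Finset (Fin n)) :
    Module.Flat R (M ⧸ (piSub Mf J ⊔ sigmaSub Mf I)) := by
  induction J using Finset.induction_on generalizing I with
  | empty =>
    have : Subsingleton (M ⧸ (piSub Mf ∅ ⊔ sigmaSub Mf I)) :=
      Submodule.Quotient.subsingleton_iff.2 (by simp)
    infer_instance
  | insert j J _ ih =>
    have hj : Mf j ⊔ sigmaSub Mf I = sigmaSub Mf (insert j I) := Finset.sup_insert.symm
    rw [piSub, Finset.inf_insert, hdist.inf_sup_eq, hj]
    have := ih I
    have := hQ (insert j I)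
    have : Module.Flat R (M ⧸ (piSub Mf J ⊔ sigmaSub Mf I ⊔ sigmaSub Mf (insert j I))) := by
      rw [sup_assoc, sup_eq_right.2 (Finset.sup_mono (Finset.subset_insert j I))]
      exact ih _
    exact Module.Flat.quotient_inf _ _

theorem statement3 {n : ℕ} (hn : 1 ≤ n) (Mf : Fin n → Submodule R M)
    (hM : Module.Flat R M)
    (hQ : ∀ I : Finset (Fin n), Module.Flat R (M ⧸ sigmaSub Mf I))
    (hdist : IsDistributiveFamily Mf) :
    ∀ I : Finset (Fin n), Module.Flat R (subquotL Mf I) := by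
  intro I
  have := hQ I
  have := flat_quotient_piSub_sup_sigmaSub hQ hdist I Iᶜ
  refine Module.Flat.of_exact
    ((Submodule.comap (piSub Mf Iᶜ).subtype (sigmaSub Mf I)).mapQ (sigmaSub Mf I)
      (piSub Mf Iᶜ).subtype le_rfl)
    (Submodule.factor (le_sup_right : sigmaSub Mf I ≤ piSub Mf Iᶜ ⊔ sigmaSub Mf I)) ?_ ?_
    (Submodule.factor_surjective _)
  · rw [← LinearMap.ker_eq_bot]
    exact Submodule.ker_liftQ_eq_bot _ _ _ (by rw [LinearMap.ker_comp, Submodule.ker_mkQ])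
  · rw [LinearMap.exact_iff, Submodule.range_mapQ, Submodule.range_subtype, Submodule.factor,
      Submodule.mapQ, Submodule.ker_liftQ]
    simp [Submodule.map_sup]
end

section
/- Let R be a commutative ring and let M^1, …, M^ℓ be R-modules such that each M^k is equipped with a finite ascending chain of submodules 0 = F^k_0 ⊆ F^k_1 ⊆ ⋯ ⊆ F^k_{n_k} = M^k whose successive quotients G^k_j := F^k_j/F^k_{j−1} are flat R-modules. Then each M^k is a flat R-module, and the tensor product M^1 ⊗_R M^2 ⊗_R ⋯ ⊗_R M^ℓ admits a finite ascending chain of submodules whose successive quotients are, up to isomorphism, exactly the R-modules G^1_{i_1} ⊗_R G^2_{i_2} ⊗_R ⋯ ⊗_R G^ℓ_{i_ℓ}, with exactly one successive quotient for each tuple (i_1,…,i_ℓ) with 1 ≤ i_k ≤ n_k for all k. -/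
/-!
STATEMENT 10: if `M^1, …, M^ℓ` are `R`-modules each equipped with a finite filtration whose
graded pieces are flat, then each `M^k` is flat, and `M^1 ⊗_R ⋯ ⊗_R M^ℓ` admits a finite
filtration whose graded pieces are, up to isomorphism, exactly the tensor products
`G^1_{i_1} ⊗_R ⋯ ⊗_R G^ℓ_{i_ℓ}`, one for each tuple `(i_1, …, i_ℓ)`.
-/

/-- The subquotient `q / p` of two submodules of `M`, i.e. `q ⧸ (p ∩ q)`. -/
abbrev subquot {R M : Type*} [CommRing R] [AddCommGroup M] [Module R M]
    (p q : Submodule R M) : Type _ :=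
  q ⧸ (Submodule.comap q.subtype p)

open scoped TensorProduct

/-- The tensor product of a family indexed by `Fin (n + 1)` splits off its first factor. -/
noncomputable def PiTensorProduct.consEquiv {R : Type*} [CommRing R] {n : ℕ}
    (M : Fin (n + 1) → Type*) [∀ k, AddCommGroup (M k)] [∀ k, Module R (M k)] :
    (M 0 ⊗[R] (⨂[R] k : Fin n, M k.succ)) ≃ₗ[R] ⨂[R] k, M k :=
  LinearEquiv.ofLinearMap
    (TensorProduct.lift
      (PiTensorProduct.lift.toLinearMap ∘ₗ (PiTensorProduct.tprod R (s := M)).curryLeft))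
    (PiTensorProduct.lift (LinearMap.uncurryLeft (M := M)
      { toFun := fun x => (TensorProduct.mk R (M 0) (⨂[R] k : Fin n, M k.succ) x).compMultilinearMap
          (PiTensorProduct.tprod R)
        map_add' := fun x y => by ext; simp
        map_smul' := fun c x => by ext; simp }))
    (by ext; simp)
    (by
      refine TensorProduct.ext ?_
      ext x y
      simp)

namespace Module

/-- `HasFiltration G L p` says that the submodule `p` has a finite descending chain of submodules,
starting at `p` and ending at `⊥`, whose successive quotients are isomorphic to the modules `G i`
for `i` running through the list `L`, in this order. -/
def HasFiltration {R M ι : Type*} [CommRing R] [AddCommGroup M] [Module R M]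
    (G : ι → Type*) [∀ i, AddCommGroup (G i)] [∀ i, Module R (G i)] :
    List ι → Submodule R M → Prop
  | [], p => p = ⊥
  | i :: L, p => ∃ q ≤ p, HasFiltration G L q ∧
      ∃ φ : p →ₗ[R] G i, Function.Surjective φ ∧ ∀ x, φ x = 0 ↔ (x : M) ∈ q

/-- An extension of flat modules is flat. -/
theorem Flat.of_exact_s10 {R A B C : Type*} [CommRing R] [AddCommGroup A] [Module R A]
    [AddCommGroup B] [Module R B] [AddCommGroup C] [Module R C] [Flat R A] [Flat R C]
    (f : A →ₗ[R] B) (g : B →ₗ[R] C) (hf : Function.Injective f) (hfg : Function.Exact f g)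
    (hg : Function.Surjective g) : Flat R B := by
  refine Flat.iff_rTensor_preserves_injective_linearMap.mpr fun P N _ _ _ _ h hh => ?_
  rw [injective_iff_map_eq_zero]
  intro x hx
  have hx' : g.lTensor P x = 0 := by
    apply Flat.rTensor_preserves_injective_linearMap (M := C) h hh
    rw [map_zero, ← LinearMap.comp_apply, LinearMap.rTensor_comp_lTensor,
      ← LinearMap.lTensor_comp_rTensor, LinearMap.comp_apply, hx, map_zero]
  obtain ⟨a, rfl⟩ := (_root_.lTensor_exact P hfg hg x).mp hx'
  have ha : a = 0 := by
    apply Flat.rTensor_preserves_injective_linearMap (M := A) h hh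
    apply LinearMap.lTensor_injective_of_exact_of_flat g hg f hf hfg N
    rw [map_zero, map_zero, ← LinearMap.comp_apply, LinearMap.lTensor_comp_rTensor,
      ← LinearMap.rTensor_comp_lTensor, LinearMap.comp_apply, hx]
  rw [ha, map_zero]

namespace HasFiltration

variable {R M N ι κ : Type*} [CommRing R] [AddCommGroup M] [Module R M]
  [AddCommGroup N] [Module R N]
  {G : ι → Type*} [∀ i, AddCommGroup (G i)] [∀ i, Module R (G i)]
  {H : κ → Type*} [∀ i, AddCommGroup (H i)] [∀ i, Module R (H i)]

theorem map_of_injective (f : M →ₗ[R] N) (hf : Function.Injective f) {L : List ι}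
    {p : Submodule R M} (h : HasFiltration G L p) : HasFiltration G L (p.map f) := by
  induction L generalizing p with
  | nil =>
    have h : p = ⊥ := h
    subst h
    exact Submodule.map_bot f
  | cons i L ih =>
    obtain ⟨q, hqp, hq, φ, hφ, hker⟩ := h
    let e := Submodule.equivMapOfInjective f hf p
    refine ⟨q.map f, Submodule.map_mono hqp, ih hq, φ ∘ₗ e.symm.toLinearMap,
      hφ.comp e.symm.surjective, fun x => ?_⟩
    obtain ⟨y, rfl⟩ := e.surjective x
    simp [e, hker, Submodule.coe_equivMapOfInjective_apply, hf.eq_iff]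

theorem of_map (σ : κ → ι) (e : ∀ j, G (σ j) ≃ₗ[R] H j) {L : List κ} {p : Submodule R M}
    (h : HasFiltration G (L.map σ) p) : HasFiltration H L p := by
  induction L generalizing p with
  | nil => exact h
  | cons j L ih =>
    obtain ⟨q, hqp, hq, φ, hφ, hker⟩ := h
    exact ⟨q, hqp, ih hq, (e j).toLinearMap ∘ₗ φ, (e j).surjective.comp hφ, by simpa using hker⟩

theorem to_map (σ : κ → ι) (e : ∀ j, H j ≃ₗ[R] G (σ j)) {L : List κ} {p : Submodule R M}
    (h : HasFiltration H L p) : HasFiltration G (L.map σ) p := by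
  induction L generalizing p with
  | nil => exact h
  | cons j L ih =>
    obtain ⟨q, hqp, hq, φ, hφ, hker⟩ := h
    exact ⟨q, hqp, ih hq, (e j).toLinearMap ∘ₗ φ, (e j).surjective.comp hφ, by simpa using hker⟩

theorem comap_append (g : M →ₗ[R] N) (hg : Function.Surjective g) {L L' : List ι}
    {p : Submodule R N} (hker : HasFiltration G L' (LinearMap.ker g))
    (h : HasFiltration G L p) : HasFiltration G (L ++ L') (p.comap g) := by
  induction L generalizing p with
  | nil =>
    have h : p = ⊥ := h
    subst h
    exact hker
  | cons i L ih =>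
    obtain ⟨q, hqp, hq, φ, hφ, hφq⟩ := h
    exact ⟨q.comap g, Submodule.comap_mono hqp, ih hq, φ ∘ₗ g.submoduleComap p,
      hφ.comp (g.submoduleComap_surjective_of_surjective p hg), fun x => hφq _⟩

theorem exact_inclusion {P : Type*} [AddCommGroup P] [Module R P] {p q : Submodule R M}
    (hqp : q ≤ p) {φ : p →ₗ[R] P} (hφ : ∀ x, φ x = 0 ↔ (x : M) ∈ q) :
    Function.Exact (Submodule.inclusion hqp) φ := fun x => by
  rw [hφ]
  exact ⟨fun hx => ⟨⟨x, hx⟩, rfl⟩, by rintro ⟨y, rfl⟩; exact y.2⟩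

theorem flat [∀ i, Flat R (G i)] {L : List ι} {p : Submodule R M}
    (h : HasFiltration G L p) : Flat R p := by
  induction L generalizing p with
  | nil =>
    have h : p = ⊥ := h
    subst h
    infer_instance
  | cons i L ih =>
    obtain ⟨q, hqp, hq, φ, hφ, hker⟩ := h
    have := ih hq
    exact Flat.of_exact_s10 (Submodule.inclusion hqp) φ (Submodule.inclusion_injective hqp)
      (exact_inclusion hqp hker) hφ

theorem lTensor (A : Type*) [AddCommGroup A] [Module R A] [Flat R A] {L : List ι}
    {p : Submodule R M} (h : HasFiltration G L p) :
    HasFiltration (fun i => A ⊗[R] G i) L (LinearMap.range (p.subtype.lTensor A)) := by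
  induction L generalizing p with
  | nil =>
    have h : p = ⊥ := h
    subst h
    change _ = ⊥
    rw [LinearMap.range_eq_bot, show (⊥ : Submodule R M).subtype = 0 by ext ⟨x, hx⟩; simpa using hx,
      LinearMap.lTensor_zero]
  | cons i L ih =>
    obtain ⟨q, hqp, hq, φ, hφ, hker⟩ := h
    have hinj := Flat.lTensor_preserves_injective_linearMap (M := A) p.subtype p.subtype_injective
    have hcomp : q.subtype.lTensor A =
        p.subtype.lTensor A ∘ₗ (Submodule.inclusion hqp).lTensor A := by
      rw [← LinearMap.lTensor_comp, Submodule.subtype_comp_inclusion]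
    let e := LinearEquiv.ofInjective _ hinj
    refine ⟨_, ?_, ih hq, φ.lTensor A ∘ₗ e.symm.toLinearMap,
      (LinearMap.lTensor_surjective A hφ).comp e.symm.surjective, fun x => ?_⟩
    · rw [hcomp]
      exact LinearMap.range_comp_le_range _ _
    · obtain ⟨y, rfl⟩ := e.surjective x
      rw [LinearMap.comp_apply, LinearEquiv.coe_coe, e.symm_apply_apply,
        lTensor_exact A (exact_inclusion hqp hker) hφ y, hcomp, LinearMap.range_comp,
        LinearEquiv.ofInjective_apply, Submodule.mem_map]
      simp [hinj.eq_iff]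

theorem map_equiv_top (e : M ≃ₗ[R] N) {L : List ι}
    (h : HasFiltration G L (⊤ : Submodule R M)) : HasFiltration G L (⊤ : Submodule R N) := by
  simpa using h.map_of_injective e.toLinearMap e.injective

theorem tensor_submodule [∀ i, Flat R (G i)] {L : List ι} {L' : List κ} {p : Submodule R M}
    (h : HasFiltration G L p) (h' : HasFiltration H L' (⊤ : Submodule R N)) :
    HasFiltration (fun i : ι × κ => G i.1 ⊗[R] H i.2) (L ×ˢ L') (⊤ : Submodule R (p ⊗[R] N)) := by
  induction L generalizing p with
  | nil =>
    have h : p = ⊥ := h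
    subst h
    exact Subsingleton.elim _ _
  | cons i L ih =>
    obtain ⟨q, hqp, hq, φ, hφ, hker⟩ := h
    have hex := exact_inclusion hqp hker
    have hinj : Function.Injective ((Submodule.inclusion hqp).rTensor N) :=
      (LinearMap.lTensor_inj_iff_rTensor_inj _ _).mp
        (LinearMap.lTensor_injective_of_exact_of_flat φ hφ _
          (Submodule.inclusion_injective hqp) hex N)
    have hK := (ih hq).map_of_injective _ hinj
    rw [Submodule.map_top, ← (rTensor_exact N hex hφ).linearMap_ker_eq] at hK
    have hT := h'.lTensor (G i)
    rw [LinearMap.range_eq_top.mpr (LinearMap.lTensor_surjective _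
      (LinearMap.range_eq_top.mp (Submodule.range_subtype _)))] at hT
    have hT' := hT.to_map (G := fun i : ι × κ => G i.1 ⊗[R] H i.2) (fun j => (i, j))
      fun j => LinearEquiv.refl R _
    exact comap_append (G := fun i : ι × κ => G i.1 ⊗[R] H i.2) (φ.rTensor N)
      (LinearMap.rTensor_surjective N hφ) hK hT'

theorem tensor [∀ i, Flat R (G i)] {L : List ι} {L' : List κ}
    (h : HasFiltration G L (⊤ : Submodule R M)) (h' : HasFiltration H L' (⊤ : Submodule R N)) :
    HasFiltration (fun i : ι × κ => G i.1 ⊗[R] H i.2) (L ×ˢ L') (⊤ : Submodule R (M ⊗[R] N)) :=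
  (h.tensor_submodule h').map_equiv_top (Submodule.topEquiv.rTensor N)

theorem piTensorProduct {n : ℕ} {M : Fin n → Type*} [∀ k, AddCommGroup (M k)]
    [∀ k, Module R (M k)] {κ : Fin n → Type*} {G : ∀ k, κ k → Type*}
    [∀ k i, AddCommGroup (G k i)] [∀ k i, Module R (G k i)] [∀ k i, Flat R (G k i)]
    {L : ∀ k, List (κ k)} (hnodup : ∀ k, (L k).Nodup) (hmem : ∀ k i, i ∈ L k)
    (h : ∀ k, HasFiltration (G k) (L k) (⊤ : Submodule R (M k))) :
    ∃ T : List (∀ k, κ k), T.Nodup ∧ (∀ i, i ∈ T) ∧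
      HasFiltration (fun i : ∀ k, κ k => ⨂[R] k, G k (i k)) T (⊤ : Submodule R (⨂[R] k, M k)) := by
  induction n with
  | zero =>
    refine ⟨[finZeroElim], List.nodup_singleton _, fun i => ?_, ⊥, bot_le, rfl,
      (Submodule.topEquiv ≪≫ₗ PiTensorProduct.isEmptyEquiv (Fin 0) ≪≫ₗ
        (PiTensorProduct.isEmptyEquiv (Fin 0)).symm).toLinearMap, LinearEquiv.surjective _,
      fun x => by rw [LinearEquiv.coe_coe, LinearEquiv.map_eq_zero_iff]; simp⟩
    rw [List.mem_singleton]
    exact Subsingleton.elim _ _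
  | succ n ih =>
    obtain ⟨T, hT, hTmem, hTfil⟩ := ih (fun k => hnodup k.succ) (fun k => hmem k.succ)
      fun k => h k.succ
    refine ⟨(L 0 ×ˢ T).map (Fin.consEquiv κ), ((hnodup 0).product hT).map (Equiv.injective _),
      fun i => List.mem_map.mpr ⟨(i 0, fun k => i k.succ), List.mem_product.mpr
        ⟨hmem 0 _, hTmem _⟩, Fin.cons_self_tail i⟩, ?_⟩
    refine of_map (G := fun i : κ 0 × (∀ k : Fin n, κ k.succ) =>
      G 0 i.1 ⊗[R] (⨂[R] k, G k.succ (i.2 k)))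
      (fun i => (i 0, fun k => i k.succ))
      (fun i => PiTensorProduct.consEquiv (R := R) fun k => G k (i k)) ?_
    have hσ : (fun i : ∀ k, κ k => (i 0, fun k : Fin n => i k.succ)) ∘ Fin.consEquiv κ = id := rfl
    rw [List.map_map, hσ, List.map_id]
    exact ((h 0).tensor hTfil).map_equiv_top (PiTensorProduct.consEquiv M)

theorem of_chain {n : ℕ} {F : Fin (n + 1) → Submodule R M} (hF : Monotone F) (h0 : F 0 = ⊥)
    (j : Fin (n + 1)) : ∃ L : List (Fin n), L.Nodup ∧ (∀ i, i ∈ L ↔ i.castSucc < j) ∧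
      HasFiltration (fun i : Fin n => subquot (F i.castSucc) (F i.succ)) L (F j) := by
  induction j using Fin.induction with
  | zero => exact ⟨[], List.nodup_nil, by simp, h0⟩
  | succ j ih =>
    obtain ⟨L, hL, hmem, h⟩ := ih
    refine ⟨j :: L, List.nodup_cons.mpr ⟨by simp [hmem], hL⟩, fun i => ?_, F j.castSucc,
      hF j.castSucc_lt_succ.le, h, Submodule.mkQ _, Submodule.mkQ_surjective _, fun x => ?_⟩
    · rw [List.mem_cons, hmem, Fin.lt_def, Fin.lt_def, Fin.ext_iff]
      simp only [Fin.val_castSucc, Fin.val_succ]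
      omega
    · simp [Submodule.Quotient.mk_eq_zero]

theorem exists_chain {L : List ι} {p : Submodule R M} (h : HasFiltration G L p) :
    ∃ F : ℕ → Submodule R M, Monotone F ∧ F 0 = ⊥ ∧ (∀ j, L.length ≤ j → F j = p) ∧
      ∀ j (hj : j < L.reverse.length),
        Nonempty (subquot (F j) (F (j + 1)) ≃ₗ[R] G (L.reverse[j])) := by
  induction L generalizing p with
  | nil => exact ⟨fun _ => p, monotone_const, h, fun _ _ => rfl, by simp⟩
  | cons i L ih =>
    obtain ⟨q, hqp, hq, φ, hφ, hker⟩ := h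
    obtain ⟨F, hF, h0, hlen, hgr⟩ := ih hq
    have hFq (j) : F j ≤ q := (hF (le_max_left j L.length)).trans (hlen _ (le_max_right _ _)).le
    obtain ⟨F', hle, hgt⟩ : ∃ F' : ℕ → Submodule R M,
        (∀ j ≤ L.length, F' j = F j) ∧ ∀ j, L.length < j → F' j = p :=
      ⟨fun j => if j ≤ L.length then F j else p, fun j hj => if_pos hj,
        fun j hj => if_neg hj.not_ge⟩
    refine ⟨F', fun a b hab => ?_, (hle 0 (Nat.zero_le _)).trans h0, fun j hj => hgt j hj,
      fun j hj => ?_⟩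
    · obtain hb | hb := le_or_gt b L.length
      · rw [hle a (hab.trans hb), hle b hb]
        exact hF hab
      · rw [hgt b hb]
        obtain ha | ha := le_or_gt a L.length
        · exact (hle a ha).trans_le ((hFq a).trans hqp)
        · exact (hgt a ha).le
    · simp only [List.length_reverse, List.length_cons] at hj
      obtain hj' | rfl := Nat.lt_succ_iff_lt_or_eq.mp hj
      · have hget : (i :: L).reverse[j]'(by simpa using hj) =
            L.reverse[j]'(by simpa using hj') := by
          simp only [List.reverse_cons]
          exact List.getElem_append_left (by simpa using hj')
        rw [hget, hle _ hj'.le, hle _ (Nat.succ_le_of_lt hj')]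
        exact hgr j _
      · have hget : (i :: L).reverse[L.length]'(by simp) = i := by simp
        rw [hget, hle _ le_rfl, hgt _ (Nat.lt_succ_self _), hlen _ le_rfl]
        have hk : Submodule.comap p.subtype q = LinearMap.ker φ := by
          ext x
          exact (hker x).symm
        exact ⟨Submodule.quotEquivOfEq _ _ hk ≪≫ₗ φ.quotKerEquivOfSurjective hφ⟩

end HasFiltration

end Module

theorem statement10 {R : Type*} [CommRing R] (ℓ : ℕ) (Mk : Fin ℓ → Type*)
    [∀ k, AddCommGroup (Mk k)] [∀ k, Module R (Mk k)]
    (nk : Fin ℓ → ℕ)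
    (F : ∀ k, Fin (nk k + 1) → Submodule R (Mk k))
    (hFmono : ∀ k, Monotone (F k)) (hF0 : ∀ k, F k 0 = ⊥)
    (hFtop : ∀ k, F k (Fin.last (nk k)) = ⊤)
    (hflat : ∀ k (j : Fin (nk k)),
      Module.Flat R (subquot (F k j.castSucc) (F k j.succ))) :
    (∀ k, Module.Flat R (Mk k)) ∧
    ∃ (e : ((k : Fin ℓ) → Fin (nk k)) ≃ Fin (∏ k, nk k))
      (F' : Fin ((∏ k, nk k) + 1) → Submodule R (PiTensorProduct R Mk)),
      Monotone F' ∧ F' 0 = ⊥ ∧ F' (Fin.last (∏ k, nk k)) = ⊤ ∧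
      ∀ i : (k : Fin ℓ) → Fin (nk k),
        Nonempty
          (subquot (F' (e i).castSucc) (F' (e i).succ) ≃ₗ[R]
            PiTensorProduct R fun k => subquot (F k (i k).castSucc) (F k (i k).succ)) := by
  choose L hL hmem hfil using fun k =>
    Module.HasFiltration.of_chain (hFmono k) (hF0 k) (Fin.last (nk k))
  simp only [hFtop] at hfil
  refine ⟨fun k => ?_, ?_⟩
  · have := (hfil k).flat
    exact Module.Flat.of_linearEquiv (Submodule.topEquiv (R := R) (M := Mk k)).symm
  obtain ⟨T, hT, hTmem, hTfil⟩ := Module.HasFiltration.piTensorProduct hL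
    (fun k i => (hmem k i).mpr i.castSucc_lt_last) hfil
  obtain ⟨F', hmono, h0, htop, hgr⟩ := hTfil.exists_chain
  let e₀ := List.Nodup.getEquivOfForallMemList T.reverse (List.nodup_reverse.mpr hT)
    fun i => List.mem_reverse.mpr (hTmem i)
  have hlen : T.reverse.length = ∏ k, nk k := by
    simpa using Fintype.card_congr e₀
  refine ⟨e₀.symm.trans (finCongr hlen), fun j => F' j, fun a b hab => hmono hab, h0,
    htop _ ?_, fun i => ?_⟩
  · simp [← hlen]
  · have hgr' := hgr (e₀.symm i) (e₀.symm i).2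
    rw [show T.reverse[(e₀.symm i : ℕ)] = i from e₀.apply_symm_apply i] at hgr'
    exact hgr'
end
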